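/- Let p be a prime and L an algebraic closure of 𝔽_p. For any nonzero a, d, j, k, m ∈ Lˣ, the vector (F,G) ∈ V₄ with F = aUX² + dWY² + jWXZ + kUYZ and G = mU is stable for the action of G₄ = SL₂(L)×SL₃(L)×Lˣ if and only if p ≠ 3. (Indeed Δ₄(F,G) = −27 a² d⁴ k⁴ j⁸ m⁶.) -/

import Mathlib

/- Zariski-closedness of a subset of affine n-space over L: it is the common zero locus
of a set of polynomial functions (with respect to the fixed coordinates). -/
def IsZariskiClosed {n : ℕ} {L : Type*} [CommRing L] (s : Set (Fin n → L)) : Prop :=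
  ∃ P : Set (MvPolynomial (Fin n) L), s = {x | ∀ p ∈ P, MvPolynomial.eval x p = 0}

/- The pair (F, G) ∈ V₄ with coordinates c (variables: inl 0,1 = U,W; inr 0,1,2 = X,Y,Z):
F = (aU+bW)X² + (cU+dW)Y² + (eU+fW)Z² + (gU+hW)XY + (iU+jW)XZ + (kU+lW)YZ, G = mU + nW. -/
noncomputable def toV4 {L : Type*} [CommRing L] (c : Fin 14 → L) :
    MvPolynomial (Fin 2 ⊕ Fin 3) L × MvPolynomial (Fin 2 ⊕ Fin 3) L :=
  ((MvPolynomial.C (c 0) * MvPolynomial.X (Sum.inl 0) + MvPolynomial.C (c 1) * MvPolynomial.X (Sum.inl 1)) * MvPolynomial.X (Sum.inr 0) ^ 2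
    + (MvPolynomial.C (c 2) * MvPolynomial.X (Sum.inl 0) + MvPolynomial.C (c 3) * MvPolynomial.X (Sum.inl 1)) * MvPolynomial.X (Sum.inr 1) ^ 2
    + (MvPolynomial.C (c 4) * MvPolynomial.X (Sum.inl 0) + MvPolynomial.C (c 5) * MvPolynomial.X (Sum.inl 1)) * MvPolynomial.X (Sum.inr 2) ^ 2
    + (MvPolynomial.C (c 6) * MvPolynomial.X (Sum.inl 0) + MvPolynomial.C (c 7) * MvPolynomial.X (Sum.inl 1)) * (MvPolynomial.X (Sum.inr 0) * MvPolynomial.X (Sum.inr 1))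
    + (MvPolynomial.C (c 8) * MvPolynomial.X (Sum.inl 0) + MvPolynomial.C (c 9) * MvPolynomial.X (Sum.inl 1)) * (MvPolynomial.X (Sum.inr 0) * MvPolynomial.X (Sum.inr 2))
    + (MvPolynomial.C (c 10) * MvPolynomial.X (Sum.inl 0) + MvPolynomial.C (c 11) * MvPolynomial.X (Sum.inl 1)) * (MvPolynomial.X (Sum.inr 1) * MvPolynomial.X (Sum.inr 2)),
   MvPolynomial.C (c 12) * MvPolynomial.X (Sum.inl 0) + MvPolynomial.C (c 13) * MvPolynomial.X (Sum.inl 1))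

/- Linear substitution of (U,W) by A ∈ SL₂(L) and of (X,Y,Z) by B ∈ SL₃(L). -/
noncomputable def sub4 {L : Type*} [CommRing L]
    (A : Matrix.SpecialLinearGroup (Fin 2) L) (B : Matrix.SpecialLinearGroup (Fin 3) L)
    (v : MvPolynomial (Fin 2 ⊕ Fin 3) L) : MvPolynomial (Fin 2 ⊕ Fin 3) L :=
  MvPolynomial.aeval
    (Sum.elim (fun i => ∑ j : Fin 2, MvPolynomial.C (A.1 i j) * MvPolynomial.X (Sum.inl j))
              (fun i => ∑ j : Fin 3, MvPolynomial.C (B.1 i j) * MvPolynomial.X (Sum.inr j))) v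

/- The action of G₄ = SL₂(L) × SL₃(L) × Lˣ on V₄:
(A, B, t)·(F, G) = (t⁻¹·F′, t³·G′), where F′, G′ are obtained by linear substitution. -/
noncomputable def act4 {L : Type*} [Field L]
    (g : Matrix.SpecialLinearGroup (Fin 2) L × Matrix.SpecialLinearGroup (Fin 3) L × Lˣ)
    (v : MvPolynomial (Fin 2 ⊕ Fin 3) L × MvPolynomial (Fin 2 ⊕ Fin 3) L) :
    MvPolynomial (Fin 2 ⊕ Fin 3) L × MvPolynomial (Fin 2 ⊕ Fin 3) L :=
  (((g.2.2 : L))⁻¹ • sub4 g.1 g.2.1 v.1, ((g.2.2 : L)) ^ 3 • sub4 g.1 g.2.1 v.2)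

/- Stability: the orbit of v (in the coordinate space of V₄ with respect to its monomial
basis) is Zariski-closed and the stabilizer of v in G₄ is finite. -/
def Stable4 {L : Type*} [Field L] (c : Fin 14 → L) : Prop :=
  IsZariskiClosed {c' : Fin 14 → L |
    ∃ g : Matrix.SpecialLinearGroup (Fin 2) L × Matrix.SpecialLinearGroup (Fin 3) L × Lˣ,
      toV4 c' = act4 g (toV4 c)} ∧
  {g : Matrix.SpecialLinearGroup (Fin 2) L × Matrix.SpecialLinearGroup (Fin 3) L × Lˣ |
      act4 g (toV4 c) = toV4 c}.Finite


/-- A ternary quadratic form, given by its coefficients. -/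
@[ext]
structure TernaryQuadratic (R : Type*) where
  (xx yy zz xy xz yz : R)

namespace TernaryQuadratic

variable {R : Type*} [CommRing R]

/-- The value of a ternary quadratic form at a point. -/
def eval (q : TernaryQuadratic R) (x y z : R) : R :=
  q.xx * x ^ 2 + q.yy * y ^ 2 + q.zz * z ^ 2 + q.xy * (x * y) + q.xz * (x * z) + q.yz * (y * z)

/-- The polar bilinear form of a ternary quadratic form. -/
def polar (q : TernaryQuadratic R) (x y z x' y' z' : R) : R :=
  2 * q.xx * (x * x') + 2 * q.yy * (y * y') + 2 * q.zz * (z * z') + q.xy * (x * y' + x' * y)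
    + q.xz * (x * z' + x' * z) + q.yz * (y * z' + y' * z)

/-- Linear substitution of the variables by the rows of a matrix. -/
def comp (q : TernaryQuadratic R) (B : Matrix (Fin 3) (Fin 3) R) : TernaryQuadratic R where
  xx := q.eval (B 0 0) (B 1 0) (B 2 0)
  yy := q.eval (B 0 1) (B 1 1) (B 2 1)
  zz := q.eval (B 0 2) (B 1 2) (B 2 2)
  xy := q.polar (B 0 0) (B 1 0) (B 2 0) (B 0 1) (B 1 1) (B 2 1)
  xz := q.polar (B 0 0) (B 1 0) (B 2 0) (B 0 2) (B 1 2) (B 2 2)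
  yz := q.polar (B 0 1) (B 1 1) (B 2 1) (B 0 2) (B 1 2) (B 2 2)

/-- The linear combination `r p + s q`. -/
def lin (r : R) (p : TernaryQuadratic R) (s : R) (q : TernaryQuadratic R) :
    TernaryQuadratic R where
  xx := r * p.xx + s * q.xx
  yy := r * p.yy + s * q.yy
  zz := r * p.zz + s * q.zz
  xy := r * p.xy + s * q.xy
  xz := r * p.xz + s * q.xz
  yz := r * p.yz + s * q.yz

/-- The discriminant of a ternary quadratic form. -/
def disc (q : TernaryQuadratic R) : R :=
  4 * q.xx * q.yy * q.zz + q.xy * q.xz * q.yz - q.xx * q.yz ^ 2 - q.yy * q.xz ^ 2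
    - q.zz * q.xy ^ 2

/-- The coefficient of `r² s` in the discriminant of `r p + s q`. -/
def mixedDisc (p q : TernaryQuadratic R) : R :=
  4 * (p.xx * p.yy * q.zz + p.xx * q.yy * p.zz + q.xx * p.yy * p.zz)
    + (p.xy * p.xz * q.yz + p.xy * q.xz * p.yz + q.xy * p.xz * p.yz)
    - (2 * p.xx * p.yz * q.yz + q.xx * p.yz ^ 2) - (2 * p.yy * p.xz * q.xz + q.yy * p.xz ^ 2)
    - (2 * p.zz * p.xy * q.xy + q.zz * p.xy ^ 2)

theorem disc_comp (q : TernaryQuadratic R) (B : Matrix (Fin 3) (Fin 3) R) :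
    (q.comp B).disc = B.det ^ 2 * q.disc := by
  simp only [disc, comp, eval, polar, Matrix.det_fin_three]
  ring

theorem mixedDisc_comp (p q : TernaryQuadratic R) (B : Matrix (Fin 3) (Fin 3) R) :
    mixedDisc (p.comp B) (q.comp B) = B.det ^ 2 * mixedDisc p q := by
  simp only [mixedDisc, comp, eval, polar, Matrix.det_fin_three]
  ring

theorem disc_lin (p q : TernaryQuadratic R) (r s : R) :
    (lin r p s q).disc
      = r ^ 3 * p.disc + r ^ 2 * s * mixedDisc p q + r * s ^ 2 * mixedDisc q p + s ^ 3 * q.disc := by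
  simp only [disc, lin, mixedDisc]
  ring

theorem mixedDisc_lin (p q : TernaryQuadratic R) (r s r' s' : R) :
    mixedDisc (lin r p s q) (lin r' p s' q)
      = 3 * r ^ 2 * r' * p.disc + (r ^ 2 * s' + 2 * r * s * r') * mixedDisc p q
        + (s ^ 2 * r' + 2 * r * s * s') * mixedDisc q p + 3 * s ^ 2 * s' * q.disc := by
  simp only [disc, lin, mixedDisc]
  ring

end TernaryQuadratic

namespace V4

open TernaryQuadratic

section Coordinates

variable {R : Type*}

/-- The coefficient of `U` in the pencil with coordinates `c`. -/
def conicU (c : Fin 14 → R) : TernaryQuadratic R := ⟨c 0, c 2, c 4, c 6, c 8, c 10⟩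

/-- The coefficient of `W` in the pencil with coordinates `c`. -/
def conicW (c : Fin 14 → R) : TernaryQuadratic R := ⟨c 1, c 3, c 5, c 7, c 9, c 11⟩

/-- The coordinates of the pair with `F = U p + W q` and `G = m U + n W`. -/
def coords (p q : TernaryQuadratic R) (m n : R) : Fin 14 → R :=
  ![p.xx, q.xx, p.yy, q.yy, p.zz, q.zz, p.xy, q.xy, p.xz, q.xz, p.yz, q.yz, m, n]

theorem conicU_coords (p q : TernaryQuadratic R) (m n : R) : conicU (coords p q m n) = p := rfl

theorem conicW_coords (p q : TernaryQuadratic R) (m n : R) : conicW (coords p q m n) = q := rfl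

theorem coords_twelve (p q : TernaryQuadratic R) (m n : R) : coords p q m n 12 = m := rfl

theorem coords_thirteen (p q : TernaryQuadratic R) (m n : R) : coords p q m n 13 = n := rfl

theorem coords_eq_of_conics {c c' : Fin 14 → R} (hU : conicU c = conicU c')
    (hW : conicW c = conicW c') (hm : c 12 = c' 12) (hn : c 13 = c' 13) : c = c' := by
  simp only [conicU, conicW, TernaryQuadratic.mk.injEq] at hU hW
  obtain ⟨h0, h2, h4, h6, h8, h10⟩ := hU
  obtain ⟨h1, h3, h5, h7, h9, h11⟩ := hW
  funext i
  fin_cases i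
  exacts [h0, h1, h2, h3, h4, h5, h6, h7, h8, h9, h10, h11, hm, hn]

end Coordinates

section CommRing

variable {R : Type*} [CommRing R]

/-- A ternary quadratic form as a polynomial in `X`, `Y`, `Z`. -/
noncomputable def conicPoly (q : TernaryQuadratic R) : MvPolynomial (Fin 2 ⊕ Fin 3) R :=
  MvPolynomial.C q.xx * MvPolynomial.X (Sum.inr 0) ^ 2
    + MvPolynomial.C q.yy * MvPolynomial.X (Sum.inr 1) ^ 2
    + MvPolynomial.C q.zz * MvPolynomial.X (Sum.inr 2) ^ 2
    + MvPolynomial.C q.xy * (MvPolynomial.X (Sum.inr 0) * MvPolynomial.X (Sum.inr 1))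
    + MvPolynomial.C q.xz * (MvPolynomial.X (Sum.inr 0) * MvPolynomial.X (Sum.inr 2))
    + MvPolynomial.C q.yz * (MvPolynomial.X (Sum.inr 1) * MvPolynomial.X (Sum.inr 2))

theorem toV4_eq (c : Fin 14 → R) :
    toV4 c = (MvPolynomial.X (Sum.inl 0) * conicPoly (conicU c)
        + MvPolynomial.X (Sum.inl 1) * conicPoly (conicW c),
      MvPolynomial.C (c 12) * MvPolynomial.X (Sum.inl 0)
        + MvPolynomial.C (c 13) * MvPolynomial.X (Sum.inl 1)) := by
  refine Prod.ext ?_ rfl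
  simp only [toV4, conicPoly, conicU, conicW]
  ring

theorem conicPoly_lin (r s : R) (p q : TernaryQuadratic R) :
    conicPoly (lin r p s q)
      = MvPolynomial.C r * conicPoly p + MvPolynomial.C s * conicPoly q := by
  simp only [conicPoly, lin, map_add, map_mul]
  ring

theorem sub4_conicPoly (A : Matrix.SpecialLinearGroup (Fin 2) R)
    (B : Matrix.SpecialLinearGroup (Fin 3) R) (q : TernaryQuadratic R) :
    sub4 A B (conicPoly q) = conicPoly (q.comp B.1) := by
  simp only [sub4, conicPoly, comp, TernaryQuadratic.eval, polar, map_add, map_mul, map_pow,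
    MvPolynomial.aeval_X, MvPolynomial.algHom_C, MvPolynomial.algebraMap_eq, Sum.elim_inr,
    Fin.sum_univ_three, map_ofNat]
  ring

theorem sub4_add (A : Matrix.SpecialLinearGroup (Fin 2) R)
    (B : Matrix.SpecialLinearGroup (Fin 3) R) (v w : MvPolynomial (Fin 2 ⊕ Fin 3) R) :
    sub4 A B (v + w) = sub4 A B v + sub4 A B w := map_add _ v w

theorem sub4_mul (A : Matrix.SpecialLinearGroup (Fin 2) R)
    (B : Matrix.SpecialLinearGroup (Fin 3) R) (v w : MvPolynomial (Fin 2 ⊕ Fin 3) R) :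
    sub4 A B (v * w) = sub4 A B v * sub4 A B w := map_mul _ v w

theorem sub4_C (A : Matrix.SpecialLinearGroup (Fin 2) R)
    (B : Matrix.SpecialLinearGroup (Fin 3) R) (r : R) :
    sub4 A B (MvPolynomial.C r) = MvPolynomial.C r := MvPolynomial.algHom_C _ r

theorem sub4_X_inl (A : Matrix.SpecialLinearGroup (Fin 2) R)
    (B : Matrix.SpecialLinearGroup (Fin 3) R) (i : Fin 2) :
    sub4 A B (MvPolynomial.X (Sum.inl i)) = MvPolynomial.C (A.1 i 0) * MvPolynomial.X (Sum.inl 0)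
      + MvPolynomial.C (A.1 i 1) * MvPolynomial.X (Sum.inl 1) := by
  rw [sub4, MvPolynomial.aeval_X, Sum.elim_inl, Fin.sum_univ_two]

/-- The invariant of degree two of the binary quartic
`(m U + n W) (e₀ U³ + e₁ U² W + e₂ U W² + e₃ W³)`. -/
def quarticI (m n e₀ e₁ e₂ e₃ : R) : R :=
  12 * (m * e₀) * (n * e₃) - 3 * (m * e₁ + n * e₀) * (m * e₃ + n * e₂) + (m * e₂ + n * e₁) ^ 2

/-- The invariant of degree three of the binary quartic
`(m U + n W) (e₀ U³ + e₁ U² W + e₂ U W² + e₃ W³)`. -/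
def quarticJ (m n e₀ e₁ e₂ e₃ : R) : R :=
  72 * (m * e₀) * (m * e₂ + n * e₁) * (n * e₃)
    + 9 * (m * e₁ + n * e₀) * (m * e₂ + n * e₁) * (m * e₃ + n * e₂)
    - 27 * (m * e₀) * (m * e₃ + n * e₂) ^ 2 - 27 * (n * e₃) * (m * e₁ + n * e₀) ^ 2
    - 2 * (m * e₂ + n * e₁) ^ 3

/-- The invariant `I` of the binary quartic `G · disc₂(F)`. -/
def invI (c : Fin 14 → R) : R :=
  quarticI (c 12) (c 13) (conicU c).disc (mixedDisc (conicU c) (conicW c))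
    (mixedDisc (conicW c) (conicU c)) (conicW c).disc

/-- The invariant `J` of the binary quartic `G · disc₂(F)`. -/
def invJ (c : Fin 14 → R) : R :=
  quarticJ (c 12) (c 13) (conicU c).disc (mixedDisc (conicU c) (conicW c))
    (mixedDisc (conicW c) (conicU c)) (conicW c).disc

theorem quarticI_subst (m n e₀ e₁ e₂ e₃ α β γ δ : R) :
    quarticI (α * m + γ * n) (β * m + δ * n)
      (α ^ 3 * e₀ + α ^ 2 * γ * e₁ + α * γ ^ 2 * e₂ + γ ^ 3 * e₃)
      (3 * α ^ 2 * β * e₀ + (α ^ 2 * δ + 2 * α * γ * β) * e₁ + (γ ^ 2 * β + 2 * α * γ * δ) * e₂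
        + 3 * γ ^ 2 * δ * e₃)
      (3 * β ^ 2 * α * e₀ + (β ^ 2 * γ + 2 * β * δ * α) * e₁ + (δ ^ 2 * α + 2 * β * δ * γ) * e₂
        + 3 * δ ^ 2 * γ * e₃)
      (β ^ 3 * e₀ + β ^ 2 * δ * e₁ + β * δ ^ 2 * e₂ + δ ^ 3 * e₃)
      = (α * δ - β * γ) ^ 4 * quarticI m n e₀ e₁ e₂ e₃ := by
  simp only [quarticI]
  ring

theorem quarticJ_subst (m n e₀ e₁ e₂ e₃ α β γ δ : R) :
    quarticJ (α * m + γ * n) (β * m + δ * n)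
      (α ^ 3 * e₀ + α ^ 2 * γ * e₁ + α * γ ^ 2 * e₂ + γ ^ 3 * e₃)
      (3 * α ^ 2 * β * e₀ + (α ^ 2 * δ + 2 * α * γ * β) * e₁ + (γ ^ 2 * β + 2 * α * γ * δ) * e₂
        + 3 * γ ^ 2 * δ * e₃)
      (3 * β ^ 2 * α * e₀ + (β ^ 2 * γ + 2 * β * δ * α) * e₁ + (δ ^ 2 * α + 2 * β * δ * γ) * e₂
        + 3 * δ ^ 2 * γ * e₃)
      (β ^ 3 * e₀ + β ^ 2 * δ * e₁ + β * δ ^ 2 * e₂ + δ ^ 3 * e₃)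
      = (α * δ - β * γ) ^ 6 * quarticJ m n e₀ e₁ e₂ e₃ := by
  simp only [quarticJ]
  ring

theorem eval_invI (x : Fin 14 → R) :
    MvPolynomial.eval x (invI (MvPolynomial.X : Fin 14 → MvPolynomial (Fin 14) R)) = invI x := by
  simp [invI, quarticI, disc, mixedDisc, conicU, conicW]

theorem eval_invJ (x : Fin 14 → R) :
    MvPolynomial.eval x (invJ (MvPolynomial.X : Fin 14 → MvPolynomial (Fin 14) R)) = invJ x := by
  simp [invJ, quarticJ, disc, mixedDisc, conicU, conicW]

theorem eval_conicPoly (q : TernaryQuadratic R) (u w x y z : R) :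
    MvPolynomial.eval (Sum.elim ![u, w] ![x, y, z]) (conicPoly q) = q.eval x y z := by
  simp [conicPoly, TernaryQuadratic.eval]

theorem ext_of_eval_eq {p q : TernaryQuadratic R}
    (h : ∀ x y z, p.eval x y z = q.eval x y z) : p = q := by
  simp only [TernaryQuadratic.eval] at h
  have hx := h 1 0 0
  have hy := h 0 1 0
  have hz := h 0 0 1
  ext
  · linear_combination hx
  · linear_combination hy
  · linear_combination hz
  · linear_combination h 1 1 0 - hx - hy
  · linear_combination h 1 0 1 - hx - hz
  · linear_combination h 0 1 1 - hy - hz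

theorem toV4_injective : Function.Injective (toV4 : (Fin 14 → R) → _) := by
  intro c c' h
  have hF : ∀ u w x y z : R, _ = _ := fun u w x y z =>
    congrArg (fun P => MvPolynomial.eval (Sum.elim ![u, w] ![x, y, z]) P.1) h
  have hG : ∀ u w : R, _ = _ := fun u w =>
    congrArg (fun P => MvPolynomial.eval (Sum.elim ![u, w] ![0, 0, 0]) P.2) h
  simp only [toV4_eq, map_add, map_mul, eval_conicPoly, MvPolynomial.eval_X, MvPolynomial.eval_C,
    Sum.elim_inl] at hF hG
  refine coords_eq_of_conics (ext_of_eval_eq fun x y z => ?_) (ext_of_eval_eq fun x y z => ?_) ?_ ?_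
  · simpa using hF 1 0 x y z
  · simpa using hF 0 1 x y z
  · simpa using hG 1 0
  · simpa using hG 0 1

theorem sub4_X_inr (A : Matrix.SpecialLinearGroup (Fin 2) R)
    (B : Matrix.SpecialLinearGroup (Fin 3) R) (i : Fin 3) :
    sub4 A B (MvPolynomial.X (Sum.inr i)) = MvPolynomial.C (B.1 i 0) * MvPolynomial.X (Sum.inr 0)
      + MvPolynomial.C (B.1 i 1) * MvPolynomial.X (Sum.inr 1)
      + MvPolynomial.C (B.1 i 2) * MvPolynomial.X (Sum.inr 2) := by
  rw [sub4, MvPolynomial.aeval_X, Sum.elim_inr, Fin.sum_univ_three]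

theorem sub4_sub4 (A A' : Matrix.SpecialLinearGroup (Fin 2) R)
    (B B' : Matrix.SpecialLinearGroup (Fin 3) R) (v : MvPolynomial (Fin 2 ⊕ Fin 3) R) :
    sub4 A B (sub4 A' B' v) = sub4 (A' * A) (B' * B) v := by
  induction v using MvPolynomial.induction_on with
  | C r => simp only [sub4_C]
  | add v w hv hw => simp only [sub4_add, hv, hw]
  | mul_X v i hv =>
    rw [sub4_mul, sub4_mul, sub4_mul, hv]
    refine congrArg (sub4 (A' * A) (B' * B) v * ·) ?_
    rcases i with i | i
    · simp only [sub4_X_inl, sub4_add, sub4_mul, sub4_C, Matrix.SpecialLinearGroup.coe_mul,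
        Matrix.mul_apply, Fin.sum_univ_two, map_add, map_mul]
      ring
    · simp only [sub4_X_inr, sub4_add, sub4_mul, sub4_C, Matrix.SpecialLinearGroup.coe_mul,
        Matrix.mul_apply, Fin.sum_univ_three, map_add, map_mul]
      ring

end CommRing

section Field

variable {L : Type*} [Field L]

/-- The action of `G₄` in coordinates. -/
def coordAct
    (g : Matrix.SpecialLinearGroup (Fin 2) L × Matrix.SpecialLinearGroup (Fin 3) L × Lˣ)
    (c : Fin 14 → L) : Fin 14 → L :=
  let p := (conicU c).comp g.2.1.1
  let q := (conicW c).comp g.2.1.1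
  let t : L := g.2.2
  coords (lin (t⁻¹ * g.1.1 0 0) p (t⁻¹ * g.1.1 1 0) q) (lin (t⁻¹ * g.1.1 0 1) p (t⁻¹ * g.1.1 1 1) q)
    (t ^ 3 * (g.1.1 0 0 * c 12 + g.1.1 1 0 * c 13)) (t ^ 3 * (g.1.1 0 1 * c 12 + g.1.1 1 1 * c 13))

theorem toV4_coordAct
    (g : Matrix.SpecialLinearGroup (Fin 2) L × Matrix.SpecialLinearGroup (Fin 3) L × Lˣ)
    (c : Fin 14 → L) : toV4 (coordAct g c) = act4 g (toV4 c) := by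
  simp only [toV4_eq, act4, coordAct, conicU_coords, conicW_coords, coords_twelve,
    coords_thirteen, conicPoly_lin, sub4_add, sub4_mul, sub4_C, sub4_X_inl, sub4_conicPoly,
    MvPolynomial.smul_eq_C_mul, map_add, map_mul, map_pow]
  refine Prod.ext ?_ ?_ <;> ring

theorem act4_mul
    (g h : Matrix.SpecialLinearGroup (Fin 2) L × Matrix.SpecialLinearGroup (Fin 3) L × Lˣ)
    (v : MvPolynomial (Fin 2 ⊕ Fin 3) L × MvPolynomial (Fin 2 ⊕ Fin 3) L) :
    act4 g (act4 h v) = act4 (h * g) v := by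
  have smul (A : Matrix.SpecialLinearGroup (Fin 2) L) (B : Matrix.SpecialLinearGroup (Fin 3) L)
      (r : L) (w : MvPolynomial (Fin 2 ⊕ Fin 3) L) : sub4 A B (r • w) = r • sub4 A B w :=
    map_smul _ r w
  simp only [act4, smul, sub4_sub4, smul_smul, Prod.fst_mul, Prod.snd_mul, Units.val_mul,
    mul_inv_rev, mul_pow, mul_comm]

theorem act4_one (v : MvPolynomial (Fin 2 ⊕ Fin 3) L × MvPolynomial (Fin 2 ⊕ Fin 3) L) :
    act4 1 v = v := by
  have h (w : MvPolynomial (Fin 2 ⊕ Fin 3) L) : sub4 1 1 w = w := by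
    rw [sub4]
    convert MvPolynomial.aeval_X_left_apply w using 2
    ext i : 1
    rcases i with i | i <;> fin_cases i <;> simp [Fin.sum_univ_two, Fin.sum_univ_three]
  simp [act4, h]

theorem coordAct_mul
    (g h : Matrix.SpecialLinearGroup (Fin 2) L × Matrix.SpecialLinearGroup (Fin 3) L × Lˣ)
    (c : Fin 14 → L) : coordAct g (coordAct h c) = coordAct (h * g) c :=
  toV4_injective (by simp only [toV4_coordAct, act4_mul])

theorem coordAct_one (c : Fin 14 → L) : coordAct 1 c = c :=
  toV4_injective (by rw [toV4_coordAct, act4_one])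

theorem coordAct_inv_eq
    (g : Matrix.SpecialLinearGroup (Fin 2) L × Matrix.SpecialLinearGroup (Fin 3) L × Lˣ)
    {c c' : Fin 14 → L} (h : coordAct g c = c') : coordAct g⁻¹ c' = c := by
  rw [← h, coordAct_mul, mul_inv_cancel, coordAct_one]

theorem toV4_eq_act4_iff
    (g : Matrix.SpecialLinearGroup (Fin 2) L × Matrix.SpecialLinearGroup (Fin 3) L × Lˣ)
    (c c' : Fin 14 → L) : toV4 c' = act4 g (toV4 c) ↔ coordAct g c = c' := by
  rw [← toV4_coordAct, toV4_injective.eq_iff, eq_comm]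

theorem invI_coordAct
    (g : Matrix.SpecialLinearGroup (Fin 2) L × Matrix.SpecialLinearGroup (Fin 3) L × Lˣ)
    (c : Fin 14 → L) : invI (coordAct g c) = invI c := by
  obtain ⟨A, B, t⟩ := g
  have hA : A.1 0 0 * A.1 1 1 - A.1 0 1 * A.1 1 0 = 1 := by rw [← Matrix.det_fin_two, A.2]
  have ht : (t : L) ≠ 0 := t.ne_zero
  have hs := quarticI_subst (t ^ 4 * c 12) (t ^ 4 * c 13) (conicU c).disc
    (mixedDisc (conicU c) (conicW c)) (mixedDisc (conicW c) (conicU c)) (conicW c).disc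
    ((t : L)⁻¹ * A.1 0 0) ((t : L)⁻¹ * A.1 0 1) ((t : L)⁻¹ * A.1 1 0) ((t : L)⁻¹ * A.1 1 1)
  have hd : (t : L)⁻¹ * A.1 0 0 * ((t : L)⁻¹ * A.1 1 1)
      - (t : L)⁻¹ * A.1 0 1 * ((t : L)⁻¹ * A.1 1 0) = (t : L)⁻¹ ^ 2 := by
    linear_combination (t : L)⁻¹ ^ 2 * hA
  have hm (r s : L) : (t : L)⁻¹ * r * (t ^ 4 * c 12) + (t : L)⁻¹ * s * (t ^ 4 * c 13)
      = t ^ 3 * (r * c 12 + s * c 13) := by field_simp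
  rw [hd, hm, hm] at hs
  simp only [invI, coordAct, conicU_coords, conicW_coords, coords_twelve, coords_thirteen,
    disc_lin, mixedDisc_lin, disc_comp, mixedDisc_comp, B.2, one_pow, one_mul]
  rw [hs]
  simp only [quarticI]
  field_simp

theorem invJ_coordAct
    (g : Matrix.SpecialLinearGroup (Fin 2) L × Matrix.SpecialLinearGroup (Fin 3) L × Lˣ)
    (c : Fin 14 → L) : invJ (coordAct g c) = invJ c := by
  obtain ⟨A, B, t⟩ := g
  have hA : A.1 0 0 * A.1 1 1 - A.1 0 1 * A.1 1 0 = 1 := by rw [← Matrix.det_fin_two, A.2]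
  have ht : (t : L) ≠ 0 := t.ne_zero
  have hs := quarticJ_subst (t ^ 4 * c 12) (t ^ 4 * c 13) (conicU c).disc
    (mixedDisc (conicU c) (conicW c)) (mixedDisc (conicW c) (conicU c)) (conicW c).disc
    ((t : L)⁻¹ * A.1 0 0) ((t : L)⁻¹ * A.1 0 1) ((t : L)⁻¹ * A.1 1 0) ((t : L)⁻¹ * A.1 1 1)
  have hd : (t : L)⁻¹ * A.1 0 0 * ((t : L)⁻¹ * A.1 1 1)
      - (t : L)⁻¹ * A.1 0 1 * ((t : L)⁻¹ * A.1 1 0) = (t : L)⁻¹ ^ 2 := by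
    linear_combination (t : L)⁻¹ ^ 2 * hA
  have hm (r s : L) : (t : L)⁻¹ * r * (t ^ 4 * c 12) + (t : L)⁻¹ * s * (t ^ 4 * c 13)
      = t ^ 3 * (r * c 12 + s * c 13) := by field_simp
  rw [hd, hm, hm] at hs
  simp only [invJ, coordAct, conicU_coords, conicW_coords, coords_twelve, coords_thirteen,
    disc_lin, mixedDisc_lin, disc_comp, mixedDisc_comp, B.2, one_pow, one_mul]
  rw [hs]
  simp only [quarticJ]
  field_simp

theorem coordAct_sl3 (B : Matrix.SpecialLinearGroup (Fin 3) L) (c : Fin 14 → L) :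
    coordAct (1, B, 1) c
      = coords ((conicU c).comp B.1) ((conicW c).comp B.1) (c 12) (c 13) := by
  simp [coordAct, lin]

theorem comp_comp (q : TernaryQuadratic L) (B B' : Matrix (Fin 3) (Fin 3) L) :
    (q.comp B).comp B' = q.comp (B * B') := by
  ext <;> simp only [comp, TernaryQuadratic.eval, polar, Matrix.mul_apply, Fin.sum_univ_three] <;>
    ring

theorem exists_sl3_column (x y z : L) (h : ¬(x = 0 ∧ y = 0 ∧ z = 0)) :
    ∃ B : Matrix.SpecialLinearGroup (Fin 3) L, B.1 0 2 = x ∧ B.1 1 2 = y ∧ B.1 2 2 = z := by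
  by_cases hz : z = 0
  · by_cases hy : y = 0
    · have hx : x ≠ 0 := fun hx => h ⟨hx, hy, hz⟩
      exact ⟨⟨!![0, 0, x; x⁻¹, 0, y; 0, 1, z], by simp [Matrix.det_fin_three, hx]⟩,
        by simp, by simp, by simp⟩
    · exact ⟨⟨!![y⁻¹, 0, x; 0, 0, y; 0, -1, z], by simp [Matrix.det_fin_three, hy]⟩,
        by simp, by simp, by simp⟩
  · exact ⟨⟨!![1, 0, x; 0, z⁻¹, y; 0, 0, z], by simp [Matrix.det_fin_three, hz]⟩,
      by simp, by simp, by simp⟩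

theorem exists_binary_form_zero [IsAlgClosed L] {n : ℕ} (hn : n ≠ 0) (c : ℕ → L) :
    ∃ r s : L, ¬(r = 0 ∧ s = 0) ∧
      ∑ i ∈ Finset.range (n + 1), c i * r ^ i * s ^ (n - i) = 0 := by
  by_cases hc : c n = 0
  · refine ⟨1, 0, by simp, Finset.sum_eq_zero fun i hi => ?_⟩
    rcases eq_or_ne i n with rfl | hin
    · simp [hc]
    · rw [zero_pow (by have := Finset.mem_range.1 hi; omega), mul_zero]
  · let P : Polynomial L := ∑ i ∈ Finset.range (n + 1), Polynomial.C (c i) * Polynomial.X ^ i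
    have hP : P.coeff n = c n := by simp [P, Polynomial.coeff_X_pow]
    obtain ⟨r, hr⟩ := IsAlgClosed.exists_root P fun h0 => hc <| by
      rw [← hP, Polynomial.coeff_eq_zero_of_degree_lt]
      rw [h0]
      exact_mod_cast Nat.pos_of_ne_zero hn
    refine ⟨r, 1, by simp, ?_⟩
    simpa [P, Polynomial.IsRoot, Polynomial.eval_finsetSum] using hr

theorem exists_comp_zz_eq_zero [IsAlgClosed L] (q : TernaryQuadratic L) :
    ∃ B : Matrix.SpecialLinearGroup (Fin 3) L, (q.comp B.1).zz = 0 := by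
  obtain ⟨r, s, hrs, h⟩ := exists_binary_form_zero two_ne_zero
    (fun i : ℕ => if i = 0 then q.yy else if i = 1 then q.xy else q.xx)
  simp [Finset.sum_range_succ] at h
  obtain ⟨B, hx, hy, hz⟩ := exists_sl3_column r s 0 (by tauto)
  refine ⟨B, ?_⟩
  simp only [comp, hx, hy, hz, TernaryQuadratic.eval]
  linear_combination h

theorem exists_comp_zz_eq_zero_pair [IsAlgClosed L] (p q : TernaryQuadratic L)
    (hp : p.disc ≠ 0) :
    ∃ B : Matrix.SpecialLinearGroup (Fin 3) L, (p.comp B.1).zz = 0 ∧ (q.comp B.1).zz = 0 := by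
  obtain ⟨B, hB⟩ := exists_comp_zz_eq_zero p
  have hd : (p.comp B.1).disc ≠ 0 := by rwa [disc_comp, B.2, one_pow, one_mul]
  suffices ∃ B' : Matrix.SpecialLinearGroup (Fin 3) L,
      ((p.comp B.1).comp B'.1).zz = 0 ∧ ((q.comp B.1).comp B'.1).zz = 0 by
    obtain ⟨B', h⟩ := this
    exact ⟨B * B', by simpa only [comp_comp, Matrix.SpecialLinearGroup.coe_mul] using h⟩
  generalize p.comp B.1 = p at hB hd
  generalize q.comp B.1 = q
  obtain ⟨A, B, C, D, E, F⟩ := p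
  obtain ⟨a, b, c, d, e, f⟩ := q
  simp only at hB
  subst hB
  obtain ⟨r, s, hrs, h⟩ := exists_binary_form_zero (n := 4) (by norm_num)
    (fun i : ℕ => if i = 0 then F ^ 2 * b - F * f * B + c * B ^ 2
      else if i = 1 then
        2 * E * F * b + F ^ 2 * d - ((E * f + F * e) * B + F * f * D) + c * (2 * D * B)
      else if i = 2 then E ^ 2 * b + 2 * E * F * d + F ^ 2 * a
        - (E * e * B + (E * f + F * e) * D + F * f * A) + c * (2 * A * B + D ^ 2)
      else if i = 3 then
        E ^ 2 * d + 2 * E * F * a - (E * e * D + (E * f + F * e) * A) + c * (2 * A * D)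
      else E ^ 2 * a - E * e * A + c * A ^ 2)
  simp [Finset.sum_range_succ] at h
  obtain ⟨B', hx, hy, hz⟩ := exists_sl3_column ((E * r + F * s) * r) ((E * r + F * s) * s)
    (-(A * r ^ 2 + D * (r * s) + B * s ^ 2)) <| by
    rintro ⟨h1, h2, h3⟩
    have hl : E * r + F * s = 0 := by
      by_contra hl
      exact hrs ⟨(mul_eq_zero.1 h1).resolve_left hl, (mul_eq_zero.1 h2).resolve_left hl⟩
    simp only [disc] at hd
    refine hrs ⟨?_, ?_⟩
    · by_contra hr
      refine hd ((mul_eq_zero.1 ?_).resolve_left (pow_ne_zero 2 hr))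
      linear_combination (D * F * r - B * (E * r - F * s)) * hl + F ^ 2 * h3
    · by_contra hs
      refine hd ((mul_eq_zero.1 ?_).resolve_left (pow_ne_zero 2 hs))
      linear_combination (D * E * s - A * (F * s - E * r)) * hl + E ^ 2 * h3
  refine ⟨B', ?_, ?_⟩ <;> simp only [comp, hx, hy, hz, TernaryQuadratic.eval]
  · ring
  · linear_combination h

/-- Two conics through `[0 : 0 : 1]` with the same tangent there span a pencil whose discriminant
has a repeated root. -/
theorem tangents_ne (h3 : (3 : L) ≠ 0) (p q : TernaryQuadratic L) (hpz : p.zz = 0)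
    (hqz : q.zz = 0) (hp : p.disc ≠ 0) (hq : q.disc ≠ 0) (hpq : mixedDisc p q = 0)
    (hqp : mixedDisc q p = 0) : p.xz * q.yz - p.yz * q.xz ≠ 0 := by
  intro h
  obtain ⟨A, B, C, D, E, F⟩ := p
  obtain ⟨a, b, c, d, e, f⟩ := q
  simp only at hpz hqz h
  subst hpz hqz
  obtain ⟨μ, rfl, rfl⟩ : ∃ μ, e = μ * E ∧ f = μ * F := by
    by_cases hE : E = 0
    · have hF : F ≠ 0 := by
        rintro rfl
        simp [disc, hE] at hp
      have he : e = 0 := by simpa [hE, hF] using h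
      exact ⟨f / F, by simp [he, hE], by field_simp⟩
    · refine ⟨e / E, by field_simp, ?_⟩
      field_simp
      linear_combination h
  simp only [disc, mixedDisc] at hp hq hpq hqp
  have hμ : 3 * μ ^ 2 * (D * E * F - A * F ^ 2 - B * E ^ 2) = 0 := by
    linear_combination 2 * μ * hpq - hqp
  have hμ0 : μ = 0 := by
    rcases mul_eq_zero.1 hμ with hμ | hμ
    · simpa [h3] using hμ
    · exact absurd (by linear_combination hμ) hp
  simp [hμ0] at hq

theorem exists_comp_eq_dualCyclic [IsAlgClosed L] (h3 : (3 : L) ≠ 0) (p q : TernaryQuadratic L)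
    (hp : p.disc ≠ 0) (hq : q.disc ≠ 0) (hpq : mixedDisc p q = 0) (hqp : mixedDisc q p = 0) :
    ∃ (B : Matrix.SpecialLinearGroup (Fin 3) L) (a d j k : L),
      p.comp B.1 = ⟨a, 0, 0, 0, 0, k⟩ ∧ q.comp B.1 = ⟨0, d, 0, 0, j, 0⟩ := by
  obtain ⟨B₁, hpz, hqz⟩ := exists_comp_zz_eq_zero_pair p q hp
  have hB₁ : B₁.1.det = 1 := B₁.2
  have ht := tangents_ne h3 (p.comp B₁.1) (q.comp B₁.1) hpz hqz (by simpa [disc_comp] using hp)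
    (by simpa [disc_comp] using hq) (by simp [mixedDisc_comp, hpq]) (by simp [mixedDisc_comp, hqp])
  obtain ⟨B₂, hB₂⟩ : ∃ B₂ : Matrix.SpecialLinearGroup (Fin 3) L,
      ((p.comp B₁.1).comp B₂.1).zz = 0 ∧ ((p.comp B₁.1).comp B₂.1).xz = 0
        ∧ ((q.comp B₁.1).comp B₂.1).zz = 0 ∧ ((q.comp B₁.1).comp B₂.1).yz = 0 := by
    generalize p.comp B₁.1 = p at *
    generalize q.comp B₁.1 = q at *
    refine ⟨⟨!![p.yz, q.yz, 0; -p.xz, -q.xz, 0; 0, 0, (p.xz * q.yz - p.yz * q.xz)⁻¹], ?_⟩,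
      ?_, ?_, ?_, ?_⟩
    · simp [Matrix.det_fin_three]
      field_simp
      ring
    all_goals simp [comp, TernaryQuadratic.eval, polar, hpz, hqz]
    all_goals try ring_nf
  simp only [comp_comp, ← Matrix.SpecialLinearGroup.coe_mul] at hB₂
  generalize B₁ * B₂ = B at hB₂
  replace hp : (p.comp B.1).disc ≠ 0 := by simpa [disc_comp] using hp
  replace hq : (q.comp B.1).disc ≠ 0 := by simpa [disc_comp] using hq
  replace hpq : mixedDisc (p.comp B.1) (q.comp B.1) = 0 := by simp [mixedDisc_comp, hpq]
  replace hqp : mixedDisc (q.comp B.1) (p.comp B.1) = 0 := by simp [mixedDisc_comp, hqp]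
  suffices ∃ (B' : Matrix.SpecialLinearGroup (Fin 3) L) (a d j k : L),
      (p.comp B.1).comp B'.1 = ⟨a, 0, 0, 0, 0, k⟩
        ∧ (q.comp B.1).comp B'.1 = ⟨0, d, 0, 0, j, 0⟩ by
    obtain ⟨B', h⟩ := this
    exact ⟨B * B', by simpa only [comp_comp, Matrix.SpecialLinearGroup.coe_mul] using h⟩
  generalize p.comp B.1 = p at *
  generalize q.comp B.1 = q at *
  obtain ⟨A, b, _, D, _, F⟩ := p
  obtain ⟨a, b', _, d, e, _⟩ := q
  simp only at hB₂
  obtain ⟨rfl, rfl, rfl, rfl⟩ := hB₂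
  simp [disc] at hp hq
  simp [mixedDisc] at hpq hqp
  have hF : F ≠ 0 := hp.2
  have he : e ≠ 0 := hq.2
  refine ⟨⟨!![1, 0, 0; 0, 1, 0; -D / F, -b / F, 1], by simp [Matrix.det_fin_three]⟩,
    A, b' , e, F, ?_, ?_⟩
  · ext <;> simp [comp, TernaryQuadratic.eval, polar] <;> field_simp <;> ring
  · ext <;> simp [comp, TernaryQuadratic.eval, polar] <;> field_simp <;> grind

/-- The relation of lying in the same orbit. -/
def Equivalent (c c' : Fin 14 → L) : Prop :=
  ∃ g : Matrix.SpecialLinearGroup (Fin 2) L × Matrix.SpecialLinearGroup (Fin 3) L × Lˣ,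
    coordAct g c = c'

theorem Equivalent.symm {c c' : Fin 14 → L} (h : Equivalent c c') : Equivalent c' c :=
  h.imp' _ fun g => coordAct_inv_eq g

theorem Equivalent.trans {c c' c'' : Fin 14 → L} (h : Equivalent c c') (h' : Equivalent c' c'') :
    Equivalent c c'' := by
  obtain ⟨g, rfl⟩ := h
  obtain ⟨g', rfl⟩ := h'
  exact ⟨g * g', (coordAct_mul g' g c).symm⟩

theorem Equivalent.invI_eq {c c' : Fin 14 → L} (h : Equivalent c c') : invI c' = invI c := by
  obtain ⟨g, rfl⟩ := h
  exact invI_coordAct g c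

theorem Equivalent.invJ_eq {c c' : Fin 14 → L} (h : Equivalent c c') : invJ c' = invJ c := by
  obtain ⟨g, rfl⟩ := h
  exact invJ_coordAct g c

theorem exists_equivalent_thirteen_eq_zero (c : Fin 14 → L) :
    ∃ c', Equivalent c c' ∧ c' 13 = 0 := by
  by_cases hm : c 12 = 0
  · refine ⟨_, ⟨(⟨!![0, 1; -1, 0], by simp [Matrix.det_fin_two]⟩, 1, 1), rfl⟩, ?_⟩
    simp [coordAct, coords_thirteen, hm]
  · refine ⟨_, ⟨(⟨!![1, -(c 13 / c 12); 0, 1], by simp [Matrix.det_fin_two]⟩, 1, 1), rfl⟩, ?_⟩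
    simp [coordAct, coords_thirteen]
    field_simp
    ring

theorem exists_equivalent_mixedDisc_eq_zero (h3 : (3 : L) ≠ 0) (c : Fin 14 → L) (hn : c 13 = 0)
    (hW : (conicW c).disc ≠ 0) :
    ∃ c', Equivalent c c' ∧ c' 13 = 0 ∧ mixedDisc (conicW c') (conicU c') = 0 := by
  let s := -mixedDisc (conicW c) (conicU c) / (3 * (conicW c).disc)
  refine ⟨_, ⟨(⟨!![1, 0; s, 1], by simp [Matrix.det_fin_two]⟩, 1, 1), rfl⟩, ?_, ?_⟩
  · simp [coordAct, coords_thirteen, hn]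
  · simp [coordAct, conicU_coords, conicW_coords, mixedDisc_lin, disc_comp, mixedDisc_comp, s]
    field_simp
    ring

theorem exists_equivalent_dualCyclic [IsAlgClosed L] (h3 : (3 : L) ≠ 0) (c : Fin 14 → L)
    (hI : invI c = 0) (hJ : invJ c ≠ 0) :
    ∃ a d j k m : L, Equivalent c (coords ⟨a, 0, 0, 0, 0, k⟩ ⟨0, d, 0, 0, j, 0⟩ m 0) := by
  obtain ⟨c₁, hc₁, hn₁⟩ := exists_equivalent_thirteen_eq_zero c
  rw [← hc₁.invI_eq] at hI
  rw [← hc₁.invJ_eq] at hJ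
  have hW₁ : (conicW c₁).disc ≠ 0 := by
    intro h
    simp [invI, quarticI, hn₁, h] at hI
    simp [invJ, quarticJ, hn₁, h] at hJ
    tauto
  obtain ⟨c₂, hc₂, hn₂, hM⟩ := exists_equivalent_mixedDisc_eq_zero h3 c₁ hn₁ hW₁
  rw [← hc₂.invI_eq] at hI
  rw [← hc₂.invJ_eq] at hJ
  simp [invI, quarticI, hn₂, hM, h3] at hI
  simp [invJ, quarticJ, hn₂, hM] at hJ
  obtain ⟨B, a, d, j, k, hp, hq⟩ := exists_comp_eq_dualCyclic h3 (conicU c₂) (conicW c₂)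
    (by tauto) (by tauto) (by tauto) hM
  refine ⟨a, d, j, k, c₂ 12, (hc₁.trans hc₂).trans ⟨(1, B, 1), ?_⟩⟩
  rw [coordAct_sl3, hp, hq, hn₂]

theorem invI_dualCyclic (a d j k m : L) :
    invI (coords ⟨a, 0, 0, 0, 0, k⟩ ⟨0, d, 0, 0, j, 0⟩ m 0) = 0 := by
  simp [invI, conicU_coords, conicW_coords, coords_twelve, coords_thirteen, quarticI, disc,
    mixedDisc]

theorem invJ_dualCyclic (a d j k m : L) :
    invJ (coords ⟨a, 0, 0, 0, 0, k⟩ ⟨0, d, 0, 0, j, 0⟩ m 0)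
      = 27 * (m ^ 3 * a * k ^ 2 * d ^ 2 * j ^ 4) := by
  simp [invJ, conicU_coords, conicW_coords, coords_twelve, coords_thirteen, quarticJ, disc,
    mixedDisc]
  ring

theorem equivalent_dualCyclic [IsAlgClosed L] {a d j k m a' d' j' k' m' : L}
    (hd : d ≠ 0) (hj : j ≠ 0) (hk : k ≠ 0) (hm : m ≠ 0)
    (hd' : d' ≠ 0) (hj' : j' ≠ 0) (hk' : k' ≠ 0) (hm' : m' ≠ 0)
    (h : m' ^ 3 * a' * k' ^ 2 * d' ^ 2 * j' ^ 4 = m ^ 3 * a * k ^ 2 * d ^ 2 * j ^ 4) :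
    Equivalent (coords ⟨a, 0, 0, 0, 0, k⟩ ⟨0, d, 0, 0, j, 0⟩ m 0)
      (coords ⟨a', 0, 0, 0, 0, k'⟩ ⟨0, d', 0, 0, j', 0⟩ m' 0) := by
  obtain ⟨t, ht⟩ := IsAlgClosed.exists_pow_nat_eq
    (d' / d * (m' / m) ^ 3 * (j' / j) ^ 2) (n := 6) (by norm_num)
  have ht0 : t ≠ 0 := by
    rintro rfl
    rw [zero_pow (by norm_num), eq_comm] at ht
    exact (by positivity : d' / d * (m' / m) ^ 3 * (j' / j) ^ 2 ≠ 0) ht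
  let x := m' / m * t⁻¹ ^ 3
  let y₁ := t⁻¹ ^ 4 * (m' / m) / (k' / k)
  let y₂ := t ^ 2 / (m' / m * (j' / j))
  have hx : x ≠ 0 := by positivity
  have hy₁ : y₁ ≠ 0 := by positivity
  have hy₂ : y₂ ≠ 0 := by positivity
  refine ⟨(⟨!![x, 0; 0, x⁻¹], by simp [Matrix.det_fin_two, hx]⟩,
    ⟨!![y₁, 0, 0; 0, y₂, 0; 0, 0, (y₁ * y₂)⁻¹], ?_⟩, Units.mk0 t ht0), ?_⟩
  · simp [Matrix.det_fin_three]
    field_simp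
  · have ht' : t ^ 6 * (d * m ^ 3 * j ^ 2) = d' * m' ^ 3 * j' ^ 2 := by
      rw [ht]
      field_simp
    refine coords_eq_of_conics ?_ ?_ ?_ ?_
    · simp only [coordAct, conicU_coords, conicW_coords]
      ext <;> simp [lin, comp, TernaryQuadratic.eval, polar, x, y₁, y₂] <;> field_simp
      refine mul_left_cancel₀ (by positivity : d ^ 2 * m ^ 3 * j ^ 4 ≠ 0) ?_
      linear_combination (-m' ^ 3) * h
        - a' * k' ^ 2 * (t ^ 6 * (d * m ^ 3 * j ^ 2) + d' * m' ^ 3 * j' ^ 2) * ht'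
    · simp only [coordAct, conicU_coords, conicW_coords]
      ext <;> simp [lin, comp, TernaryQuadratic.eval, polar, x, y₁, y₂] <;> field_simp
      linear_combination ht'
    · simp [coordAct, coords_twelve, coords_thirteen, x]
      field_simp
    · simp [coordAct, coords_twelve, coords_thirteen]

theorem isZariskiClosed_orbit_dualCyclic [IsAlgClosed L] (h3 : (3 : L) ≠ 0) {a d j k m : L}
    (ha : a ≠ 0) (hd : d ≠ 0) (hj : j ≠ 0) (hk : k ≠ 0) (hm : m ≠ 0) :
    IsZariskiClosed {c' : Fin 14 → L |
      Equivalent (coords ⟨a, 0, 0, 0, 0, k⟩ ⟨0, d, 0, 0, j, 0⟩ m 0) c'} := by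
  have h27 : (27 : L) ≠ 0 := by
    rw [show (27 : L) = 3 ^ 3 by norm_num]
    exact pow_ne_zero 3 h3
  refine ⟨{invI MvPolynomial.X, invJ MvPolynomial.X
    - MvPolynomial.C (27 * (m ^ 3 * a * k ^ 2 * d ^ 2 * j ^ 4))}, ?_⟩
  ext c
  simp only [Set.mem_ofPred_eq, Set.mem_insert_iff, Set.mem_singleton_iff, forall_eq_or_imp,
    forall_eq, map_sub, eval_invI, eval_invJ, MvPolynomial.eval_C, sub_eq_zero]
  constructor
  · intro h
    rw [h.invI_eq, h.invJ_eq, invI_dualCyclic, invJ_dualCyclic]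
    exact ⟨rfl, rfl⟩
  · rintro ⟨hI, hJ⟩
    have hJ0 : invJ c ≠ 0 := by
      rw [hJ]
      positivity
    obtain ⟨a', d', j', k', m', h⟩ := exists_equivalent_dualCyclic h3 c hI hJ0
    have hJ' := h.invJ_eq
    rw [invJ_dualCyclic] at hJ'
    rw [← hJ'] at hJ0
    simp at hJ0
    refine (equivalent_dualCyclic hd hj hk hm (by tauto) (by tauto) (by tauto) (by tauto) ?_).trans
      h.symm
    exact mul_left_cancel₀ h27 (hJ'.trans hJ)

theorem dualCyclic_stabilizer (h3 : (3 : L) ≠ 0) {a d j k m : L}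
    (ha : a ≠ 0) (hd : d ≠ 0) (hj : j ≠ 0) (hk : k ≠ 0) (hm : m ≠ 0)
    {A : Matrix.SpecialLinearGroup (Fin 2) L} {B : Matrix.SpecialLinearGroup (Fin 3) L} {t : Lˣ}
    (h : coordAct (A, B, t) (coords ⟨a, 0, 0, 0, 0, k⟩ ⟨0, d, 0, 0, j, 0⟩ m 0)
      = coords ⟨a, 0, 0, 0, 0, k⟩ ⟨0, d, 0, 0, j, 0⟩ m 0) :
    A.1 0 1 = 0 ∧ A.1 1 0 = 0 ∧ A.1 1 1 = A.1 0 0 ∧ A.1 0 0 ^ 2 = 1 ∧ (t : L) ^ 6 = 1 ∧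
      ∃ r : L, r ^ 6 = 1 ∧
        comp ⟨a, 0, 0, 0, 0, k⟩ B.1 = ⟨r * a, 0, 0, 0, 0, r * k⟩ ∧
        comp ⟨0, d, 0, 0, j, 0⟩ B.1 = ⟨0, r * d, 0, 0, r * j, 0⟩ := by
  have hA : A.1 0 0 * A.1 1 1 - A.1 0 1 * A.1 1 0 = 1 := by rw [← Matrix.det_fin_two, A.2]
  have ht : (t : L) ≠ 0 := t.ne_zero
  have hU := congrArg conicU h
  have hW := congrArg conicW h
  have hm' := congrFun h 12
  have hn' := congrFun h 13
  simp only [coordAct, conicU_coords, conicW_coords, coords_twelve, coords_thirteen] at hU hW hm' hn'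
  generalize hα : A.1 0 0 = α at *
  generalize hβ : A.1 0 1 = β at *
  generalize hγ : A.1 1 0 = γ at *
  generalize hδ : A.1 1 1 = δ at *
  have hβ0 : β = 0 := by simpa [hm] using hn'
  subst hβ0
  have htα : (t : L) ^ 3 * α = 1 := mul_right_cancel₀ hm (by linear_combination hm')
  have hαδ : α * δ = 1 := by linear_combination hA
  have hδ0 : δ ≠ 0 := right_ne_zero_of_mul_eq_one hαδ
  have hM := congrArg₂ mixedDisc hW hU
  rw [mixedDisc_lin] at hM
  simp [disc_comp, mixedDisc_comp] at hM
  simp [disc, mixedDisc, h3, hδ0, hd, hj] at hM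
  subst hM
  have hdU := congrArg disc hU
  have hdW := congrArg disc hW
  rw [disc_lin] at hdU hdW
  simp [disc_comp, mixedDisc_comp] at hdU hdW
  simp [disc] at hdU hdW
  field_simp at hdU hdW
  have hα4 : α ^ 4 = 1 := by linear_combination α * hdU + htα
  have hδ3 : α ^ 3 = δ ^ 3 := by rw [hdU, hdW]
  have hα2 : α ^ 2 = 1 := by
    have h6 : α ^ 6 = 1 := by
      linear_combination α ^ 3 * hδ3 + (α ^ 2 * δ ^ 2 + α * δ + 1) * hαδ
    linear_combination h6 - α ^ 2 * hα4
  have hδα : δ = α := by linear_combination α * hαδ - δ * hα2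
  have ht6 : (t : L) ^ 6 = 1 := by linear_combination (t ^ 3 * α + 1) * htα - t ^ 6 * hα2
  have htt : (t : L) * (t : L)⁻¹ = 1 := mul_inv_cancel₀ ht
  refine ⟨rfl, rfl, hδα, hα2, ht6, t * α, ?_, ?_, ?_⟩
  · linear_combination α ^ 6 * ht6 + (α ^ 4 + α ^ 2 + 1) * hα2
  · have hsolve {x y c : L} (hx : (t : L)⁻¹ * α * x + (t : L)⁻¹ * 0 * y = c) : x = t * α * c := by
      linear_combination t * α * hx - x * hα2 - α ^ 2 * x * htt
    simp only [lin, TernaryQuadratic.ext_iff] at hU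
    obtain ⟨h1, h2, h3, h4, h5, h6⟩ := hU
    ext
    exacts [hsolve h1, by simpa using hsolve h2, by simpa using hsolve h3,
      by simpa using hsolve h4, by simpa using hsolve h5, hsolve h6]
  · have hsolve {x y c : L} (hx : (t : L)⁻¹ * 0 * y + (t : L)⁻¹ * δ * x = c) : x = t * α * c := by
      rw [hδα] at hx
      linear_combination t * α * hx - x * hα2 - α ^ 2 * x * htt
    simp only [lin, TernaryQuadratic.ext_iff] at hW
    obtain ⟨h1, h2, h3, h4, h5, h6⟩ := hW
    ext
    exacts [by simpa using hsolve h1, hsolve h2, by simpa using hsolve h3,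
      by simpa using hsolve h4, hsolve h5, by simpa using hsolve h6]

theorem dualCyclic_diagonal {a d j k r : L}
    (ha : a ≠ 0) (hd : d ≠ 0) (hj : j ≠ 0) (hk : k ≠ 0) (hr : r ^ 6 = 1)
    {B : Matrix.SpecialLinearGroup (Fin 3) L}
    (hU : comp ⟨a, 0, 0, 0, 0, k⟩ B.1 = ⟨r * a, 0, 0, 0, 0, r * k⟩)
    (hW : comp ⟨0, d, 0, 0, j, 0⟩ B.1 = ⟨0, r * d, 0, 0, r * j, 0⟩)
    (hx : B.1 0 2 = 0) (hy : B.1 1 2 = 0) (i l : Fin 3) : B.1 i l ^ 13 = B.1 i l := by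
  have hB := B.2
  rw [Matrix.det_fin_three] at hB
  simp only [comp, TernaryQuadratic.eval, polar, TernaryQuadratic.mk.injEq, hx, hy] at hU hW hB
  have hz : B.1 2 2 ≠ 0 := by
    intro hz
    simp [hz] at hB
  obtain ⟨hU1, hU2, hU3, hU4, hU5, hU6⟩ := hU
  obtain ⟨hW1, hW2, hW3, hW4, hW5, hW6⟩ := hW
  have h10 : B.1 1 0 = 0 := by simpa [hk, hz] using hU5
  have h01 : B.1 0 1 = 0 := by simpa [hj, hz] using hW6
  have hxyz : B.1 0 0 * B.1 1 1 * B.1 2 2 = 1 := by simpa [h10, h01] using hB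
  have h00 : B.1 0 0 ≠ 0 := fun h => by simp [h] at hxyz
  have h11 : B.1 1 1 ≠ 0 := fun h => by simp [h] at hxyz
  have h20 : B.1 2 0 = 0 := by simpa [hk, h10, h01, h11] using hU4
  have h21 : B.1 2 1 = 0 := by simpa [hj, h10, h01, h00] using hW4
  have hx2 : B.1 0 0 ^ 2 = r := mul_left_cancel₀ ha (by simpa [h10, mul_comm r] using hU1)
  have hy2 : B.1 1 1 ^ 2 = r := mul_left_cancel₀ hd (by simpa [h01, mul_comm r] using hW2)
  have hx12 : B.1 0 0 ^ 12 = 1 := by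
    rw [show (12 : ℕ) = 2 * 6 from rfl, pow_mul, hx2, hr]
  have hy12 : B.1 1 1 ^ 12 = 1 := by
    rw [show (12 : ℕ) = 2 * 6 from rfl, pow_mul, hy2, hr]
  have hz12 : B.1 2 2 ^ 12 = 1 := by
    have := congrArg (· ^ 12) hxyz
    simpa [mul_pow, hx12, hy12] using this
  fin_cases i <;> fin_cases l <;> simp [*, pow_succ _ 12]

theorem finite_entries_pow_thirteen :
    {g : Matrix.SpecialLinearGroup (Fin 2) L × Matrix.SpecialLinearGroup (Fin 3) L × Lˣ |
      (∀ i l, g.1.1 i l ^ 13 = g.1.1 i l) ∧ (∀ i l, g.2.1.1 i l ^ 13 = g.2.1.1 i l) ∧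
        (g.2.2 : L) ^ 13 = g.2.2}.Finite := by
  have hS : {x : L | x ^ 13 = x}.Finite := by
    refine (Polynomial.finite_setOfPred_isRoot
      (p := (Polynomial.X ^ 13 - Polynomial.X : Polynomial L)) ?_).subset fun x hx => ?_
    · exact (FiniteField.X_pow_card_sub_X_ne_zero L (by norm_num))
    · simpa [sub_eq_zero] using hx
  have hM (n : ℕ) : {M : Matrix (Fin n) (Fin n) L | ∀ i l, M i l ^ 13 = M i l}.Finite :=
    Set.Finite.pi' fun _ => Set.Finite.pi' fun _ => hS
  refine (((hM 2).prod ((hM 3).prod hS)).preimage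
    (f := fun g : Matrix.SpecialLinearGroup (Fin 2) L × Matrix.SpecialLinearGroup (Fin 3) L × Lˣ =>
      (g.1.1, g.2.1.1, (g.2.2 : L))) ?_).subset fun g hg => hg
  rintro ⟨A, B, t⟩ - ⟨A', B', t'⟩ - h
  simp only [Prod.mk.injEq] at h
  exact Prod.ext (Subtype.ext h.1) (Prod.ext (Subtype.ext h.2.1) (Units.ext h.2.2))

theorem column_proportional {a d j k : L} (ha : a ≠ 0) (hd : d ≠ 0) (hk : k ≠ 0)
    {M : Matrix (Fin 3) (Fin 3) L}
    (hM : a * M 0 2 ^ 2 + k * (M 1 2 * M 2 2) = 0 ∧ d * M 1 2 ^ 2 + j * (M 0 2 * M 2 2) = 0)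
    (B : Matrix.SpecialLinearGroup (Fin 3) L)
    (hN : a * B.1 0 2 ^ 2 + k * (B.1 1 2 * B.1 2 2) = 0 ∧
      d * B.1 1 2 ^ 2 + j * (B.1 0 2 * B.1 2 2) = 0)
    (h : M 1 2 / M 0 2 = B.1 1 2 / B.1 0 2) : ∃ c, ∀ i, M i 2 = c * B.1 i 2 := by
  have hB := B.2
  rw [Matrix.det_fin_three] at hB
  generalize B.1 = N at *
  have hiff {P : Matrix (Fin 3) (Fin 3) L}
      (hP : a * P 0 2 ^ 2 + k * (P 1 2 * P 2 2) = 0 ∧ d * P 1 2 ^ 2 + j * (P 0 2 * P 2 2) = 0) :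
      P 0 2 = 0 ↔ P 1 2 = 0 :=
    ⟨fun h0 => by simpa [h0, hd] using hP.2, fun h0 => by simpa [h0, ha] using hP.1⟩
  by_cases hx : M 0 2 = 0
  · have hy := (hiff hM).1 hx
    have hN0 : N 0 2 = 0 ∧ N 1 2 = 0 := by
      rw [hx, div_zero, eq_comm, div_eq_zero_iff] at h
      have := hiff hN
      tauto
    have hz : N 2 2 ≠ 0 := fun hz => by simp [hN0, hz] at hB
    refine ⟨M 2 2 / N 2 2, fun i => ?_⟩
    fin_cases i <;> simp [hx, hy, hN0, hz]
  · have hy : M 1 2 ≠ 0 := fun h0 => hx ((hiff hM).2 h0)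
    have hx' : N 0 2 ≠ 0 := fun h0 => by simp [h0, hx, hy] at h
    have hy' : N 1 2 ≠ 0 := fun h0 => hx' ((hiff hN).2 h0)
    have hxy : M 1 2 * N 0 2 = N 1 2 * M 0 2 := by rwa [div_eq_div_iff hx hx'] at h
    refine ⟨M 0 2 / N 0 2, fun i => ?_⟩
    fin_cases i
    · simp [hx']
    · simp only [Fin.mk_one]
      field_simp
      linear_combination hxy
    · simp only [Fin.reduceFinMk]
      field_simp
      refine mul_left_cancel₀ (mul_ne_zero (mul_ne_zero hk hy) hy') ?_
      linear_combination N 1 2 * N 0 2 * hM.1 - M 1 2 * M 0 2 * hN.1 + a * M 0 2 * N 0 2 * hxy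

theorem finite_stabilizer_dualCyclic (h3 : (3 : L) ≠ 0) {a d j k m : L}
    (ha : a ≠ 0) (hd : d ≠ 0) (hj : j ≠ 0) (hk : k ≠ 0) (hm : m ≠ 0) :
    {g | coordAct g (coords ⟨a, 0, 0, 0, 0, k⟩ ⟨0, d, 0, 0, j, 0⟩ m 0)
      = coords ⟨a, 0, 0, 0, 0, k⟩ ⟨0, d, 0, 0, j, 0⟩ m 0}.Finite := by
  set v := coords ⟨a, 0, 0, 0, 0, k⟩ ⟨0, d, 0, 0, j, 0⟩ m 0 with hv
  have hcol {g} (hg : coordAct g v = v) :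
      a * g.2.1.1 0 2 ^ 2 + k * (g.2.1.1 1 2 * g.2.1.1 2 2) = 0 ∧
        d * g.2.1.1 1 2 ^ 2 + j * (g.2.1.1 0 2 * g.2.1.1 2 2) = 0 := by
    obtain ⟨-, -, -, -, -, r, -, hU, hW⟩ := dualCyclic_stabilizer h3 ha hd hj hk hm hg
    have hU := congrArg zz hU
    have hW := congrArg zz hW
    simp [comp, TernaryQuadratic.eval] at hU hW
    exact ⟨hU, hW⟩
  have hdiag : {g | coordAct g v = v ∧ g.2.1.1 0 2 = 0 ∧ g.2.1.1 1 2 = 0}.Finite := by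
    refine finite_entries_pow_thirteen.subset ?_
    rintro ⟨A, B, t⟩ ⟨hg, hx, hy⟩
    obtain ⟨hβ, hγ, hδ, hα, ht, r, hr, hU, hW⟩ := dualCyclic_stabilizer h3 ha hd hj hk hm hg
    refine ⟨fun i l => ?_, dualCyclic_diagonal ha hd hj hk hr hU hW hx hy, ?_⟩
    · have : A.1 0 0 ^ 13 = A.1 0 0 := by
        rw [pow_succ, show (12 : ℕ) = 2 * 6 from rfl, pow_mul, hα, one_pow, one_mul]
      fin_cases i <;> fin_cases l <;> simp [*]
    · rw [pow_succ, show (12 : ℕ) = 6 * 2 from rfl, pow_mul, ht, one_pow, one_mul]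
  refine Set.Finite.of_finite_fibers (fun g => g.2.1.1 1 2 / g.2.1.1 0 2) ?_ ?_
  · have hP : (Polynomial.X ^ 4 - Polynomial.C (a * j / (d * k)) * Polynomial.X :
        Polynomial L) ≠ 0 := by
      intro h
      have := congrArg (Polynomial.coeff · 4) h
      simp at this
    refine (Polynomial.finite_setOfPred_isRoot hP).subset ?_
    rintro _ ⟨g, hg, rfl⟩
    obtain ⟨hU, hW⟩ := hcol hg
    by_cases hx : g.2.1.1 0 2 = 0
    · simp [hx]
    · have hy3 : d * k * g.2.1.1 1 2 ^ 3 = a * j * g.2.1.1 0 2 ^ 3 := by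
        linear_combination k * g.2.1.1 1 2 * hW - j * g.2.1.1 0 2 * hU
      simp only [Set.mem_ofPred_eq, Polynomial.IsRoot.def, Polynomial.eval_sub,
        Polynomial.eval_pow, Polynomial.eval_X, Polynomial.eval_mul, Polynomial.eval_C, sub_eq_zero]
      field_simp
      linear_combination g.2.1.1 1 2 * hy3
  · rintro _ ⟨h, hh, rfl⟩
    refine (hdiag.image (h * ·)).subset ?_
    rintro g ⟨hg, hgh⟩
    refine ⟨h⁻¹ * g, ⟨?_, ?_⟩, by simp⟩
    · rw [← coordAct_mul, coordAct_inv_eq h hh]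
      exact hg
    · obtain ⟨c, hc⟩ := column_proportional ha hd hk (hcol hg) h.2.1 (hcol hh) hgh
      have hmul (i : Fin 3) : (h⁻¹ * g).2.1.1 i 2 = c * (1 : Matrix (Fin 3) (Fin 3) L) i 2 := by
        have hone : h.2.1⁻¹.1 * h.2.1.1 = 1 := congrArg Subtype.val (inv_mul_cancel h.2.1)
        rw [← hone, Matrix.mul_apply, Finset.mul_sum]
        refine (Matrix.mul_apply (M := h.2.1⁻¹.1) (N := g.2.1.1)).trans ?_
        exact Finset.sum_congr rfl fun l _ => by rw [hc]; ring
      exact ⟨(hmul 0).trans (by simp), (hmul 1).trans (by simp)⟩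

theorem equivalent_of_three_eq_zero [IsAlgClosed L] (h3 : (3 : L) = 0) {a d j k m : L}
    (hd : d ≠ 0) (hj : j ≠ 0) (hk : k ≠ 0) :
    Equivalent (coords ⟨a, 0, 0, 0, 0, k⟩ ⟨0, d, 0, 0, j, 0⟩ m 0)
      (coords ⟨0, 0, 0, 0, 0, 1⟩ ⟨0, d / k ^ 2, 0, 0, j * k, 0⟩ m 0) := by
  obtain ⟨c, hc⟩ := IsAlgClosed.exists_pow_nat_eq (-(a * k ^ 2) / (d * j ^ 2))
    (n := 3) (by norm_num)
  have hc' : c ^ 3 * (d * j ^ 2) = -(a * k ^ 2) := by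
    rw [hc]
    field_simp
  refine ⟨(⟨!![1, 0; c, 1], by simp [Matrix.det_fin_two]⟩,
    ⟨!![k, 0, 0; -(c * j), k⁻¹, 0; -(c ^ 2 * d * j / k), -(c * d / k ^ 2), 1], ?_⟩, 1), ?_⟩
  · simp [Matrix.det_fin_three, hk]
  · refine coords_eq_of_conics ?_ ?_ ?_ ?_
    · simp only [coordAct, conicU_coords, conicW_coords]
      ext <;> simp [lin, comp, TernaryQuadratic.eval, polar] <;> field_simp
      · linear_combination hc'
      · ring
      · linear_combination (-(c ^ 2 * d * j)) * h3
      · ring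
    · simp only [coordAct, conicU_coords, conicW_coords]
      ext <;> simp [lin, comp, TernaryQuadratic.eval, polar] <;> field_simp
      · ring
      · linear_combination (-(c * d * j)) * h3
    · simp [coordAct, coords_twelve, coords_thirteen]
    · simp [coordAct, coords_twelve, coords_thirteen]

theorem equivalent_smul_of_torus (d j m : L) {s : L} (hs : s ≠ 0) :
    Equivalent (coords ⟨0, 0, 0, 0, 0, 1⟩ ⟨0, d, 0, 0, j, 0⟩ m 0)
      (s • coords ⟨0, 0, 0, 0, 0, 1⟩ ⟨0, d, 0, 0, j, 0⟩ m 0) := by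
  refine ⟨(⟨!![(s ^ 2)⁻¹, 0; 0, s ^ 2], by simp [Matrix.det_fin_two, hs]⟩,
    ⟨!![(s ^ 4)⁻¹, 0, 0; 0, 1, 0; 0, 0, s ^ 4], by simp [Matrix.det_fin_three, hs]⟩,
    Units.mk0 s hs), ?_⟩
  refine coords_eq_of_conics ?_ ?_ ?_ ?_
  · simp only [coordAct, conicU_coords, conicW_coords]
    ext <;> simp [lin, comp, TernaryQuadratic.eval, polar, conicU, coords]
    field_simp
  · simp only [coordAct, conicU_coords, conicW_coords]
    ext <;> simp [lin, comp, TernaryQuadratic.eval, polar, conicW, coords]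
    · field_simp
      exact Or.inl trivial
    · field_simp
  · simp [coordAct, coords_twelve, coords_thirteen]
    field_simp
  · simp [coordAct, coords_twelve, coords_thirteen]

theorem not_isZariskiClosed_orbit_of_three_eq_zero [IsAlgClosed L] (h3 : (3 : L) = 0)
    {a d j k m : L} (hd : d ≠ 0) (hj : j ≠ 0) (hk : k ≠ 0) (hm : m ≠ 0) :
    ¬ IsZariskiClosed {c' : Fin 14 → L |
      Equivalent (coords ⟨a, 0, 0, 0, 0, k⟩ ⟨0, d, 0, 0, j, 0⟩ m 0) c'} := by
  rintro ⟨P, hP⟩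
  have hv := equivalent_of_three_eq_zero h3 (a := a) (m := m) hd hj hk
  have hzero : Equivalent (coords ⟨a, 0, 0, 0, 0, k⟩ ⟨0, d, 0, 0, j, 0⟩ m 0) 0 := by
    refine (Set.ext_iff.1 hP 0).2 fun f hf => ?_
    set w : Fin 14 → L := coords ⟨0, 0, 0, 0, 0, 1⟩ ⟨0, d / k ^ 2, 0, 0, j * k, 0⟩ m 0
    let F : Polynomial L := MvPolynomial.aeval (fun i => Polynomial.X * Polynomial.C (w i)) f
    have hF (s : L) : F.eval s = MvPolynomial.eval (s • w) f := by
      clear hf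
      induction f using MvPolynomial.induction_on with
      | C x => simp [F]
      | add f g hf hg => simpa [F] using congrArg₂ (· + ·) hf hg
      | mul_X f i hf =>
        simp only [F, map_mul, Polynomial.eval_mul, MvPolynomial.aeval_X, MvPolynomial.eval_X,
          Polynomial.eval_X, Polynomial.eval_C, Pi.smul_apply, smul_eq_mul] at hf ⊢
        rw [hf]
    have hF0 : F = 0 := by
      refine Polynomial.eq_zero_of_infinite_isRoot F
        ((Set.infinite_univ.sdiff (Set.finite_singleton 0)).mono ?_)
      rintro s ⟨-, hs⟩
      exact (hF s).trans
        ((Set.ext_iff.1 hP _).1 (hv.trans (equivalent_smul_of_torus _ _ _ hs)) f hf)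
    simpa [hF0] using (hF 0).symm
  obtain ⟨g, hg⟩ := hzero.symm
  have := congrFun hg 12
  simp [coordAct, coords_twelve] at this
  exact hm this.symm

/-- Stability expressed through the action on coordinates. -/
theorem stable4_iff (c : Fin 14 → L) :
    Stable4 c ↔ IsZariskiClosed {c' | Equivalent c c'} ∧ {g | coordAct g c = c}.Finite := by
  simp only [Stable4, Equivalent, toV4_eq_act4_iff, eq_comm (a := act4 _ _)]

end Field

end V4

/-
STATEMENT 9 (Corollary 4.3(2)): for p prime and L an algebraic closure of 𝔽_p, the dual
cyclic vector (F, G) with F = aUX² + dWY² + jWXZ + kUYZ and G = mU, where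
a, d, j, k, m ∈ Lˣ, is stable for the action of G₄ = SL₂(L) × SL₃(L) × Lˣ if and only
if p ≠ 3.  Coordinate placement (order a,…,n): index 0 = a, 3 = d, 9 = j, 10 = k, 12 = m.
-/
theorem dual_cyclic_stable4_iff_p_ne_three
    (p : ℕ) (hp : p.Prime)
    {L : Type*} [Field L] [IsAlgClosed L] [CharP L p]
    (a d j k m : Lˣ) :
    Stable4 ![(a : L), 0, 0, (d : L), 0, 0, 0, 0, 0, (j : L), (k : L), 0, (m : L), 0] ↔
      p ≠ 3 := by
  have h3 : p ≠ 3 ↔ (3 : L) ≠ 0 := by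
    have := CharP.cast_eq_zero_iff L p 3
    rw [Nat.prime_dvd_prime_iff_eq hp Nat.prime_three] at this
    exact_mod_cast not_congr this.symm
  rw [h3]
  refine (V4.stable4_iff (V4.coords (R := L) ⟨a, 0, 0, 0, 0, k⟩ ⟨0, d, 0, 0, j, 0⟩ m 0)).trans
    ⟨?_, ?_⟩
  · rintro ⟨h, -⟩ h3
    exact V4.not_isZariskiClosed_orbit_of_three_eq_zero h3 d.ne_zero j.ne_zero k.ne_zero
      m.ne_zero h
  · intro h3
    exact ⟨V4.isZariskiClosed_orbit_dualCyclic h3 a.ne_zero d.ne_zero j.ne_zero k.ne_zero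
      m.ne_zero, V4.finite_stabilizer_dualCyclic h3 a.ne_zero d.ne_zero j.ne_zero k.ne_zero
      m.ne_zero⟩
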